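/- (Laminate necessity: only the half-half laminate direction can degenerate.) Assume the Gutiérrez conditions. Let χ : ℝ → {0,1} be measurable and 1-periodic, set θ₁ := ∫₀¹ χ(t) dt, and consider the laminate medium with quadratic form A·𝕃(x)A = χ(x₁)Q₁(A) + (1−χ(x₁))Q₂(A). Let a, b ∈ ℝ² and M = a⊗b be a rank-one matrix, and suppose there exists a sequence (vₙ) of Lipschitz ℤ²-periodic maps ℝ² → ℝ² with sup_n ∫_{[0,1)²} |Dvₙ(x)|² dx < ∞ and ∫_{[0,1)²} (M + Dvₙ(x))·𝕃(x)(M + Dvₙ(x)) dx → 0 as n → ∞. Then M₁₁ = M₁₂ = M₂₁ = 0, so M = κ e₂⊗e₂ for some κ ∈ ℝ; and if θ₁ ≠ 1/2 then M = 0. -/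

import Mathlib

open MeasureTheory

/-- The isotropic elasticity quadratic form on 2×2 real matrices with Lamé
parameters `lam`, `mu`: `Q_{λ,μ}(A) = (λ+2μ)(A₁₁²+A₂₂²) + 2λA₁₁A₂₂ + μ(A₁₂+A₂₁)²`. -/
def isoQ (lam mu : ℝ) (A : Matrix (Fin 2) (Fin 2) ℝ) : ℝ :=
  (lam + 2 * mu) * ((A 0 0) ^ 2 + (A 1 1) ^ 2) + 2 * lam * (A 0 0 * A 1 1)
    + mu * (A 0 1 + A 1 0) ^ 2

/-- The Jacobian matrix of a map `v : ℝ² → ℝ²` at `x`: `(jac v x) i j = ∂ⱼ vⁱ (x)`.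
(For a Lipschitz map this coincides a.e. with the total derivative, by Rademacher.) -/
noncomputable def jac (v : (Fin 2 → ℝ) → (Fin 2 → ℝ)) (x : Fin 2 → ℝ) :
    Matrix (Fin 2) (Fin 2) ℝ :=
  Matrix.of fun i j => fderiv ℝ v x (Pi.single j 1) i

/-- `ℤ²`-periodicity of a map `ℝ² → ℝ²`. -/
def ZsqPeriodic (v : (Fin 2 → ℝ) → (Fin 2 → ℝ)) : Prop :=
  ∀ (x : Fin 2 → ℝ) (z : Fin 2 → ℤ), v (x + fun i => (z i : ℝ)) = v x

/-- The unit cell `[0,1)²`. -/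
def unitCell : Set (Fin 2 → ℝ) := Set.univ.pi fun _ => Set.Ico (0 : ℝ) 1

/-- The rank-one matrix `e₂ ⊗ e₂`. -/
def e2e2 : Matrix (Fin 2) (Fin 2) ℝ := Matrix.of fun i j => if i = 1 ∧ j = 1 then 1 else 0

/-!
The determinant is a null Lagrangian: `det (M + Dv)` has mean `det M` over the unit cell. Adding
`4 μ₁ det` to the energy density therefore changes the total energy by a constant only, while it
turns both phases into sums of squares. Since `λ₂ + μ₂ = -μ₁`, the first phase then charges only
the trace and the rotation, the second only the deviatoric part and the rotation. If the energy
tends to `0` and `det M ≤ 0`, these squares tend to `0` in mean.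

Each `∂₂ vⁱ` is orthogonal to functions of `x₁`, so the means of suitable combinations of the
strain `M + Dv` with coefficients affine in `χ x₁` depend on `M` and `θ₁` only; by Jensen they are
controlled by the squares above. This gives `M₁₂ = M₂₁`, `M₁₁ + (2θ₁ - 1) M₂₂ = 0` and
`(1 - θ₁) M₁₂ = 0`, and with `det M = 0` the conclusion is algebra.
-/

open Filter Topology Bornology

lemma norm_inv_smul_sub_le_of_lipschitz {V F : Type*} [NormedAddCommGroup V] [NormedSpace ℝ V]
    [NormedAddCommGroup F] [NormedSpace ℝ F] {f : V → F} {K : NNReal} (hf : LipschitzWith K f)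
    (t : ℝ) (x u : V) : ‖t⁻¹ • (f (x + t • u) - f x)‖ ≤ K * ‖u‖ := by
  rcases eq_or_ne t 0 with rfl | ht
  · simpa using mul_nonneg K.coe_nonneg (norm_nonneg u)
  rw [norm_smul, norm_inv, inv_mul_le_iff₀ (norm_pos_iff.2 ht)]
  calc ‖f (x + t • u) - f x‖ ≤ K * ‖x + t • u - x‖ := hf.norm_sub_le _ _
    _ = ‖t‖ * (K * ‖u‖) := by rw [add_sub_cancel_left, norm_smul]; ring

lemma integrable_comp_of_ae_mem_isCompact {Ω X E : Type*} [MeasurableSpace Ω] [TopologicalSpace X]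
    [NormedAddCommGroup E] {P : Measure Ω} [IsFiniteMeasure P] {k : Set X} (hk : IsCompact k)
    {f : Ω → X} (hf : AEStronglyMeasurable f P) (hfk : ∀ᵐ x ∂P, f x ∈ k) {G : X → E}
    (hG : Continuous G) : Integrable (fun x => G (f x)) P := by
  obtain ⟨C, hC⟩ := hk.exists_bound_of_continuousOn hG.continuousOn
  exact .of_bound (hG.comp_aestronglyMeasurable hf) C (hfk.mono fun x hx => hC _ hx)

lemma sq_integral_le_integral_sq {Ω : Type*} [MeasurableSpace Ω] {P : Measure Ω}
    [IsProbabilityMeasure P] {φ : Ω → ℝ} (hφ : Integrable φ P)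
    (hφ2 : Integrable (fun x => φ x ^ 2) P) : (∫ x, φ x ∂P) ^ 2 ≤ ∫ x, φ x ^ 2 ∂P :=
  even_two.convexOn_pow.map_integral_le (continuous_pow 2).continuousOn isClosed_univ
    (ae_of_all _ fun _ => trivial) hφ hφ2

section FundamentalDomain

variable {V : Type*} [NormedAddCommGroup V] [MeasurableSpace V] [BorelSpace V]
  {μ : Measure V} {L : AddSubgroup V} [Countable L] {s : Set V}

lemma setIntegral_comp_add_right_of_periodic [μ.IsAddLeftInvariant] {E : Type*}
    [NormedAddCommGroup E] [NormedSpace ℝ E] (hs : IsAddFundamentalDomain L s μ)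
    {f : V → E} (hf : ∀ g ∈ L, f.Periodic g) (c : V) :
    ∫ x in s, f (x + c) ∂μ = ∫ x in s, f x ∂μ := by
  have hf' (g : L) (x : V) : f (g +ᵥ x) = f x := by
    rw [AddSubgroup.vadd_def, vadd_eq_add, add_comm, hf g g.2]
  rw [hs.setIntegral_eq (hs.vadd_of_comm c) hf', ← Set.image_vadd,
    (measurePreserving_vadd c μ).setIntegral_image_emb (measurableEmbedding_const_vadd c)]
  simp only [vadd_eq_add, add_comm]

variable [ProperSpace V]

lemma integrableOn_of_continuous_of_isBounded [IsFiniteMeasureOnCompacts μ] (hb : IsBounded s)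
    {f : V → ℝ} (hf : Continuous f) : IntegrableOn f s μ :=
  (hf.continuousOn.integrableOn_compact hb.isCompact_closure).mono_set subset_closure

lemma setIntegral_sub_mul_sub_of_periodic [IsFiniteMeasureOnCompacts μ] [μ.IsAddLeftInvariant]
    (hs : IsAddFundamentalDomain L s μ) (hb : IsBounded s) {f g : V → ℝ} (hf : Continuous f)
    (hg : Continuous g) (hfp : ∀ l ∈ L, f.Periodic l) (hgp : ∀ l ∈ L, g.Periodic l) (c d : V) :
    ∫ x in s, (f (x + c) - f x) * (g (x + d) - g x) ∂μ
      = ∫ x in s, (f (x + -d) - f x) * (g (x + -c) - g x) ∂μ := by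
  have expand (c d : V) : ∫ x in s, (f (x + c) - f x) * (g (x + d) - g x) ∂μ
      = (∫ x in s, f (x + c) * g (x + d) ∂μ) - (∫ x in s, f (x + c) * g x ∂μ)
        - (∫ x in s, f x * g (x + d) ∂μ) + ∫ x in s, f x * g x ∂μ := by
    rw [← integral_sub, ← integral_sub, ← integral_add]
    · congr with x
      ring
    all_goals exact integrableOn_of_continuous_of_isBounded hb (by fun_prop)
  have shift (c d e : V) : ∫ x in s, f (x + (c + e)) * g (x + (d + e)) ∂μ
      = ∫ x in s, f (x + c) * g (x + d) ∂μ := by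
    have hp : ∀ l ∈ L, (fun x => f (x + c) * g (x + d)).Periodic l := fun l hl =>
      ((hfp l hl).add_const c).mul ((hgp l hl).add_const d)
    simpa only [add_assoc, add_comm e] using setIntegral_comp_add_right_of_periodic hs hp e
  have h₁ := shift (-d) (-c) (c + d)
  have h₂ := shift (-d) 0 d
  have h₃ := shift 0 (-c) c
  rw [show -d + (c + d) = c by abel, show -c + (c + d) = d by abel] at h₁
  simp only [neg_add_cancel, zero_add, add_zero] at h₂ h₃
  rw [expand, expand]
  linarith

end FundamentalDomain

section Lipschitz

variable {V : Type*} [NormedAddCommGroup V] [NormedSpace ℝ V] [FiniteDimensional ℝ V]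
  [MeasurableSpace V] [BorelSpace V] {μ : Measure V} [μ.IsAddHaarMeasure] {L : AddSubgroup V}
  [Countable L] {s : Set V} {f g : V → ℝ} {Kf Kg : NNReal}

lemma tendsto_setIntegral_slope_mul_slope (hb : IsBounded s) (hf : LipschitzWith Kf f)
    (hg : LipschitzWith Kg g) (u w : V) :
    Tendsto (fun t : ℝ => ∫ x in s, t⁻¹ • (f (x + t • u) - f x) * t⁻¹ • (g (x + t • w) - g x) ∂μ)
      (𝓝[>] 0) (𝓝 (∫ x in s, lineDeriv ℝ f x u * lineDeriv ℝ g x w ∂μ)) := by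
  have := isFiniteMeasure_restrict.2 (hb.measure_lt_top (μ := μ)).ne
  refine tendsto_integral_filter_of_norm_le_const (.of_forall fun t => ?_)
    ⟨Kf * ‖u‖ * (Kg * ‖w‖), .of_forall fun t => ae_of_all _ fun x => ?_⟩ ?_
  · have := hf.continuous
    have := hg.continuous
    exact Continuous.aestronglyMeasurable (by fun_prop)
  · rw [norm_mul]
    exact mul_le_mul (norm_inv_smul_sub_le_of_lipschitz hf t x u)
      (norm_inv_smul_sub_le_of_lipschitz hg t x w) (norm_nonneg _) (by positivity)
  · filter_upwards [ae_restrict_of_ae (hf.ae_lineDifferentiableAt u),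
      ae_restrict_of_ae (hg.ae_lineDifferentiableAt w)] with x hfx hgx
    exact hfx.hasLineDerivAt.tendsto_slope_zero_right.mul
      hgx.hasLineDerivAt.tendsto_slope_zero_right

lemma setIntegral_lineDeriv_mul_lineDeriv_comm (hs : IsAddFundamentalDomain L s μ)
    (hb : IsBounded s) (hf : LipschitzWith Kf f) (hg : LipschitzWith Kg g)
    (hfp : ∀ l ∈ L, f.Periodic l) (hgp : ∀ l ∈ L, g.Periodic l) (u w : V) :
    ∫ x in s, lineDeriv ℝ f x u * lineDeriv ℝ g x w ∂μ
      = ∫ x in s, lineDeriv ℝ f x w * lineDeriv ℝ g x u ∂μ := by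
  have hlim := tendsto_setIntegral_slope_mul_slope (μ := μ) hb hf hg (-w) (-u)
  simp only [lineDeriv_neg, neg_mul_neg] at hlim
  refine tendsto_nhds_unique (tendsto_setIntegral_slope_mul_slope hb hf hg u w)
    (hlim.congr fun t => ?_)
  simp only [smul_mul_smul_comm, integral_smul, smul_neg]
  rw [setIntegral_sub_mul_sub_of_periodic hs hb hf.continuous hg.continuous hfp hgp,
    neg_neg, neg_neg]

lemma setIntegral_lineDeriv_mul_eq_zero (hs : IsAddFundamentalDomain L s μ) (hb : IsBounded s)
    (hf : LipschitzWith Kf f) (hfp : ∀ l ∈ L, f.Periodic l) {w : V → ℝ}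
    (hw : IntegrableOn w s μ) (hwp : ∀ l ∈ L, w.Periodic l) {u : V}
    (hwu : ∀ t : ℝ, w.Periodic (t • u)) : ∫ x in s, lineDeriv ℝ f x u * w x ∂μ = 0 := by
  have hsm := hs.nullMeasurableSet
  have hint (c : V) : IntegrableOn (fun x => f (x + c) * w x) s μ := by
    have hc : Continuous fun x => f (x + c) := hf.continuous.comp (continuous_add_const c)
    obtain ⟨C, hC⟩ := hb.isCompact_closure.exists_bound_of_continuousOn hc.continuousOn
    exact hw.bdd_mul hc.aestronglyMeasurable
      ((ae_restrict_mem₀ hsm).mono fun x hx => hC x (subset_closure hx))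
  have hslope (t : ℝ) : ∫ x in s, t⁻¹ • (f (x + t • u) - f x) * w x ∂μ = 0 := by
    have hshift := setIntegral_comp_add_right_of_periodic hs
      (f := fun x => f x * w x) (fun l hl => (hfp l hl).mul (hwp l hl)) (t • u)
    simp only [hwu t _] at hshift
    have hint₀ := hint 0
    simp only [add_zero] at hint₀
    simp only [smul_mul_assoc, sub_mul, integral_smul]
    rw [integral_sub (hint _) hint₀, hshift, sub_self, smul_zero]
  have hind (F : V → ℝ) : ∫ x, F x * s.indicator w x ∂μ = ∫ x in s, F x * w x ∂μ := by
    simp only [← integral_indicator₀ hsm, Set.indicator_mul_right]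
  have hlim := hf.integral_inv_smul_sub_mul_tendsto_integral_lineDeriv_mul
    (hw.integrable_indicator₀ hsm) u
  simp only [hind, hslope] at hlim
  exact tendsto_nhds_unique hlim tendsto_const_nhds

end Lipschitz

section UnitCell

/-- The integer lattice `ℤ²`, as the lattice of periods for which `unitCell` is a cell. -/
def intLattice : AddSubgroup (Fin 2 → ℝ) :=
  (Submodule.span ℤ (Set.range (Pi.basisFun ℝ (Fin 2)))).toAddSubgroup

instance : Countable intLattice :=
  inferInstanceAs (Countable (Submodule.span ℤ (Set.range (Pi.basisFun ℝ (Fin 2)))))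

instance : IsProbabilityMeasure ((volume : Measure (Fin 2 → ℝ)).restrict unitCell) :=
  ⟨by simp [unitCell, Real.volume_pi_Ico]⟩

lemma exists_intCast_eq_of_mem_intLattice {g : Fin 2 → ℝ} (hg : g ∈ intLattice) :
    ∃ z : Fin 2 → ℤ, (fun i => (z i : ℝ)) = g := by
  choose z hz using ((Pi.basisFun ℝ (Fin 2)).mem_span_iff_repr_mem ℤ g).1 hg
  exact ⟨z, funext fun i => by simpa using hz i⟩

lemma isAddFundamentalDomain_unitCell : IsAddFundamentalDomain intLattice unitCell := by
  rw [unitCell, ← ZSpan.fundamentalDomain_pi_basisFun]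
  exact ZSpan.isAddFundamentalDomain' _ volume

lemma isBounded_unitCell : IsBounded unitCell :=
  .pi fun _ => Metric.isBounded_Ico 0 1

lemma ZsqPeriodic.periodic {v : (Fin 2 → ℝ) → (Fin 2 → ℝ)} (hv : ZsqPeriodic v) :
    ∀ g ∈ intLattice, v.Periodic g := fun _ hg x => by
  obtain ⟨z, rfl⟩ := exists_intCast_eq_of_mem_intLattice hg
  exact hv x z

lemma periodic_comp_eval_of_mem_intLattice {χ : ℝ → ℝ} (hχ : χ.Periodic 1) (i : Fin 2) :
    ∀ g ∈ intLattice, (fun x : Fin 2 → ℝ => χ (x i)).Periodic g := fun _ hg x => by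
  obtain ⟨z, rfl⟩ := exists_intCast_eq_of_mem_intLattice hg
  simpa using hχ.int_mul (z i) (x i)

lemma setIntegral_unitCell_comp_eval {χ : ℝ → ℝ} (hχ : Measurable χ) (i : Fin 2) :
    ∫ x in unitCell, χ (x i) = ∫ t in (0 : ℝ)..1, χ t := by
  have : IsProbabilityMeasure ((volume : Measure ℝ).restrict (Set.Ico 0 1)) := ⟨by simp⟩
  rw [unitCell, volume_pi, Measure.restrict_pi_pi,
    integral_comp_eval (μ := fun _ : Fin 2 => (volume : Measure ℝ).restrict (Set.Ico 0 1))
      hχ.aestronglyMeasurable,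
    intervalIntegral.integral_of_le zero_le_one, integral_Ico_eq_integral_Ioc]

end UnitCell

section Jacobian

variable {v : (Fin 2 → ℝ) → (Fin 2 → ℝ)} {K : NNReal}

lemma aestronglyMeasurable_jac (v : (Fin 2 → ℝ) → (Fin 2 → ℝ)) {μ : Measure (Fin 2 → ℝ)} :
    AEStronglyMeasurable (jac v) μ := by
  have hmeas : Measurable fun x i j => fderiv ℝ v x (Pi.single j 1) i :=
    measurable_pi_iff.2 fun i => measurable_pi_iff.2 fun j =>
      (measurable_pi_apply i).comp (measurable_fderiv_apply_const ℝ v (Pi.single j 1))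
  exact hmeas.stronglyMeasurable.aestronglyMeasurable

lemma abs_jac_le_of_lipschitz (hv : LipschitzWith K v) (x : Fin 2 → ℝ) (i j : Fin 2) :
    |jac v x i j| ≤ K := by
  calc |jac v x i j| ≤ ‖fderiv ℝ v x (Pi.single j 1)‖ :=
        norm_le_pi_norm (fderiv ℝ v x (Pi.single j 1)) i
    _ ≤ K * ‖(Pi.single j 1 : Fin 2 → ℝ)‖ :=
        (fderiv ℝ v x).le_of_opNorm_le (norm_fderiv_le_of_lipschitz ℝ hv) _
    _ = K := by simp [Pi.norm_single]

lemma ae_jac_eq_lineDeriv (hv : LipschitzWith K v) :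
    ∀ᵐ x, ∀ i j, jac v x i j = lineDeriv ℝ (fun y => v y i) x (Pi.single j 1) := by
  filter_upwards [hv.ae_differentiableAt] with x hx i j
  exact ((hasFDerivAt_pi'.1 hx.hasFDerivAt i).hasLineDerivAt _).lineDeriv.symm

lemma integrableOn_comp_phase_jac (hv : LipschitzWith K v) {χ : ℝ → ℝ} (hχ : Measurable χ)
    (hχI : ∀ t, χ t ∈ Set.Icc 0 1) {G : ℝ × Matrix (Fin 2) (Fin 2) ℝ → ℝ} (hG : Continuous G) :
    IntegrableOn (fun x => G (χ (x 0), jac v x)) unitCell := by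
  have hk : IsCompact (Set.univ.pi fun _ => Set.univ.pi fun _ => Set.Icc (-K : ℝ) K :
      Set (Matrix (Fin 2) (Fin 2) ℝ)) :=
    isCompact_univ_pi fun _ => isCompact_univ_pi fun _ => isCompact_Icc
  refine integrable_comp_of_ae_mem_isCompact (isCompact_Icc.prod hk)
    ((hχ.comp (measurable_pi_apply 0)).aestronglyMeasurable.prodMk (aestronglyMeasurable_jac v))
    (ae_of_all _ fun x => ⟨hχI _, fun i _ j _ => ?_⟩) hG
  exact abs_le.1 (abs_jac_le_of_lipschitz hv x i j)

lemma integrableOn_comp_jac (hv : LipschitzWith K v) {G : Matrix (Fin 2) (Fin 2) ℝ → ℝ}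
    (hG : Continuous G) : IntegrableOn (fun x => G (jac v x)) unitCell :=
  integrableOn_comp_phase_jac hv (χ := fun _ => 0) measurable_const (by simp)
    (hG.comp continuous_snd)

lemma setIntegral_jac_mul_eq_zero (hv : LipschitzWith K v) (hper : ZsqPeriodic v) (i j : Fin 2)
    {w : (Fin 2 → ℝ) → ℝ} (hw : IntegrableOn w unitCell) (hwp : ∀ g ∈ intLattice, w.Periodic g)
    (hwj : ∀ t : ℝ, w.Periodic (t • Pi.single j 1)) :
    ∫ x in unitCell, jac v x i j * w x = 0 := by
  rw [← setIntegral_lineDeriv_mul_eq_zero isAddFundamentalDomain_unitCell isBounded_unitCell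
    ((LipschitzWith.eval i).comp hv)
    (fun g hg => (hper.periodic g hg).comp fun y => y i) hw hwp hwj]
  refine integral_congr_ae (ae_restrict_of_ae ?_)
  filter_upwards [ae_jac_eq_lineDeriv hv] with x hx
  rw [hx]
  rfl

lemma setIntegral_jac_eq_zero (hv : LipschitzWith K v) (hper : ZsqPeriodic v) (i j : Fin 2) :
    ∫ x in unitCell, jac v x i j = 0 := by
  simpa using setIntegral_jac_mul_eq_zero hv hper i j (w := fun _ => 1) (integrable_const 1)
    (fun _ _ _ => rfl) (fun _ _ => rfl)

lemma setIntegral_add_jac_mul (hv : LipschitzWith K v) (hper : ZsqPeriodic v)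
    (M : Matrix (Fin 2) (Fin 2) ℝ) (i j : Fin 2) {w : (Fin 2 → ℝ) → ℝ}
    (hw : IntegrableOn w unitCell) (hwp : ∀ g ∈ intLattice, w.Periodic g)
    (hwj : ∀ t : ℝ, w.Periodic (t • Pi.single j 1)) :
    ∫ x in unitCell, (M + jac v x) i j * w x = M i j * ∫ x in unitCell, w x := by
  have hjac : AEStronglyMeasurable (fun x => jac v x i j) (volume.restrict unitCell) :=
    (integrableOn_comp_jac hv (G := fun N => N i j) (by fun_prop)).aestronglyMeasurable
  have hjacw : IntegrableOn (fun x => jac v x i j * w x) unitCell :=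
    hw.bdd_mul hjac (ae_of_all _ fun x => abs_jac_le_of_lipschitz hv x i j)
  simp only [Matrix.add_apply, add_mul]
  rw [integral_add (hw.const_mul _) hjacw, integral_const_mul,
    setIntegral_jac_mul_eq_zero hv hper i j hw hwp hwj, add_zero]

lemma setIntegral_det_jac_eq_zero (hv : LipschitzWith K v) (hper : ZsqPeriodic v) :
    ∫ x in unitCell, (jac v x).det = 0 := by
  have hlip (i : Fin 2) := (LipschitzWith.eval i).comp hv
  have hperiodic (i : Fin 2) (g) (hg : g ∈ intLattice) := (hper.periodic g hg).comp fun y => y i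
  have hcomm := setIntegral_lineDeriv_mul_lineDeriv_comm isAddFundamentalDomain_unitCell
    isBounded_unitCell (hlip 0) (hlip 1) (hperiodic 0) (hperiodic 1) (Pi.single 0 1) (Pi.single 1 1)
  have hae := ae_restrict_of_ae (s := unitCell) (ae_jac_eq_lineDeriv hv)
  simp only [Matrix.det_fin_two]
  rw [integral_sub (integrableOn_comp_jac hv (G := fun N => N 0 0 * N 1 1) (by fun_prop))
    (integrableOn_comp_jac hv (G := fun N => N 0 1 * N 1 0) (by fun_prop)), sub_eq_zero]
  calc ∫ x in unitCell, jac v x 0 0 * jac v x 1 1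
      = _ := integral_congr_ae (hae.mono fun x hx => by simp only [hx]; rfl)
    _ = _ := hcomm
    _ = ∫ x in unitCell, jac v x 0 1 * jac v x 1 0 :=
      integral_congr_ae (hae.mono fun x hx => by simp only [hx]; rfl)

lemma setIntegral_det_add_jac (hv : LipschitzWith K v) (hper : ZsqPeriodic v)
    (M : Matrix (Fin 2) (Fin 2) ℝ) : ∫ x in unitCell, (M + jac v x).det = M.det := by
  let ℓ (N : Matrix (Fin 2) (Fin 2) ℝ) : ℝ :=
    M 1 1 * N 0 0 + M 0 0 * N 1 1 - M 1 0 * N 0 1 - M 0 1 * N 1 0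
  have det_add (N : Matrix (Fin 2) (Fin 2) ℝ) : (M + N).det = M.det + ℓ N + N.det := by
    simp only [Matrix.det_fin_two, Matrix.add_apply, ℓ]
    ring
  have hint {G : Matrix (Fin 2) (Fin 2) ℝ → ℝ} (hG : Continuous G) :
      IntegrableOn (fun x => G (jac v x)) unitCell := integrableOn_comp_jac hv hG
  have hℓ : ∫ x in unitCell, ℓ (jac v x) = 0 := by
    rw [integral_sub, integral_sub, integral_add]
    · simp only [integral_const_mul, setIntegral_jac_eq_zero hv hper, mul_zero, add_zero, sub_zero]
    · exact hint (G := fun N => M 1 1 * N 0 0) (by fun_prop)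
    · exact hint (G := fun N => M 0 0 * N 1 1) (by fun_prop)
    · exact hint (G := fun N => M 1 1 * N 0 0 + M 0 0 * N 1 1) (by fun_prop)
    · exact hint (G := fun N => M 1 0 * N 0 1) (by fun_prop)
    · exact hint (G := fun N => M 1 1 * N 0 0 + M 0 0 * N 1 1 - M 1 0 * N 0 1) (by fun_prop)
    · exact hint (G := fun N => M 0 1 * N 1 0) (by fun_prop)
  simp only [det_add]
  rw [integral_add (hint (G := fun N => M.det + ℓ N) (by fun_prop)) (hint (by fun_prop)),
    integral_add (integrable_const _) (hint (by fun_prop)), hℓ, setIntegral_det_jac_eq_zero hv hper]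
  simp

end Jacobian

section Energy

lemma isoQ_add_det_eq (lam mu τ : ℝ) (A : Matrix (Fin 2) (Fin 2) ℝ) :
    isoQ lam mu A + 4 * τ * A.det = (lam + mu + τ) * (A 0 0 + A 1 1) ^ 2
      + (mu - τ) * ((A 0 0 - A 1 1) ^ 2 + (A 0 1 + A 1 0) ^ 2) + τ * (A 0 1 - A 1 0) ^ 2 := by
  simp only [isoQ, Matrix.det_fin_two]
  ring

/-- How far `A` is from costing nothing in a mixture of the phases with volume fractions `s` and
`1 - s`, once `4 μ₁ det` is added to the energy: the rotation counts in both phases, the trace in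
the first, the deviatoric part in the second. The elastic moduli are left out as weights, so that
the bounds by the defect do not involve them. -/
def phaseDefect (s : ℝ) (A : Matrix (Fin 2) (Fin 2) ℝ) : ℝ :=
  (A 0 1 - A 1 0) ^ 2 + s * (A 0 0 + A 1 1) ^ 2
    + (1 - s) * ((A 0 0 - A 1 1) ^ 2 + (A 0 1 + A 1 0) ^ 2)

lemma phaseDefect_nonneg {s : ℝ} (hs : s ∈ Set.Icc 0 1) (A : Matrix (Fin 2) (Fin 2) ℝ) :
    0 ≤ phaseDefect s A := by
  have := hs.1
  have := sub_nonneg.2 hs.2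
  unfold phaseDefect
  positivity

lemma mul_phaseDefect_le {lam1 mu1 lam2 mu2 c s : ℝ} (hmu : mu1 = -(lam2 + mu2)) (hc₀ : c ≤ mu1)
    (hc₁ : c ≤ lam1 + 2 * mu1) (hc₂ : c ≤ mu2 - mu1) (hs : s ∈ Set.Icc 0 1)
    (A : Matrix (Fin 2) (Fin 2) ℝ) :
    c * phaseDefect s A
      ≤ s * isoQ lam1 mu1 A + (1 - s) * isoQ lam2 mu2 A + 4 * mu1 * A.det := by
  obtain ⟨hs₀, hs₁⟩ := hs
  have hs₁' := sub_nonneg.2 hs₁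
  have hrot := mul_le_mul_of_nonneg_right hc₀ (sq_nonneg (A 0 1 - A 1 0))
  have htrace := mul_le_mul_of_nonneg_right hc₁ (mul_nonneg hs₀ (sq_nonneg (A 0 0 + A 1 1)))
  have hdev := mul_le_mul_of_nonneg_right hc₂
    (mul_nonneg hs₁' (add_nonneg (sq_nonneg (A 0 0 - A 1 1)) (sq_nonneg (A 0 1 + A 1 0))))
  have hQ₁ := isoQ_add_det_eq lam1 mu1 mu1 A
  have hQ₂ := isoQ_add_det_eq lam2 mu2 mu1 A
  rw [show lam2 + mu2 + mu1 = 0 by linarith] at hQ₂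
  calc c * phaseDefect s A
      = c * (A 0 1 - A 1 0) ^ 2 + c * (s * (A 0 0 + A 1 1) ^ 2)
        + c * ((1 - s) * ((A 0 0 - A 1 1) ^ 2 + (A 0 1 + A 1 0) ^ 2)) := by
        unfold phaseDefect; ring
    _ ≤ mu1 * (A 0 1 - A 1 0) ^ 2 + (lam1 + 2 * mu1) * (s * (A 0 0 + A 1 1) ^ 2)
        + (mu2 - mu1) * ((1 - s) * ((A 0 0 - A 1 1) ^ 2 + (A 0 1 + A 1 0) ^ 2)) :=
        add_le_add (add_le_add hrot htrace) hdev
    _ = s * (isoQ lam1 mu1 A + 4 * mu1 * A.det)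
        + (1 - s) * (isoQ lam2 mu2 A + 4 * mu1 * A.det) := by rw [hQ₁, hQ₂]; ring
    _ = _ := by ring

lemma sq_rot_le_phaseDefect {s : ℝ} (hs : s ∈ Set.Icc 0 1) (A : Matrix (Fin 2) (Fin 2) ℝ) :
    (A 0 1 - A 1 0) ^ 2 ≤ phaseDefect s A := by
  have := hs.1
  have := sub_nonneg.2 hs.2
  unfold phaseDefect
  rw [add_assoc]
  exact le_add_of_nonneg_right (by positivity)

lemma sq_diag_le_phaseDefect {s : ℝ} (hs : s ∈ Set.Icc 0 1) (A : Matrix (Fin 2) (Fin 2) ℝ) :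
    (A 0 0 + (2 * s - 1) * A 1 1) ^ 2 ≤ phaseDefect s A := by
  have hs₁ := sub_nonneg.2 hs.2
  calc (A 0 0 + (2 * s - 1) * A 1 1) ^ 2
      = (s * (A 0 0 + A 1 1) + (1 - s) * (A 0 0 - A 1 1)) ^ 2 := by ring
    _ ≤ s * (A 0 0 + A 1 1) ^ 2 + (1 - s) * (A 0 0 - A 1 1) ^ 2 :=
      even_two.convexOn_pow.2 trivial trivial hs.1 hs₁ (add_sub_cancel s 1)
    _ ≤ phaseDefect s A := by
      unfold phaseDefect
      linarith [sq_nonneg (A 0 1 - A 1 0), mul_nonneg hs₁ (sq_nonneg (A 0 1 + A 1 0))]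

lemma sq_shear_le_phaseDefect {s : ℝ} (hs : s ∈ Set.Icc 0 1) (A : Matrix (Fin 2) (Fin 2) ℝ) :
    ((1 - s) * A 0 1) ^ 2 ≤ phaseDefect s A := by
  obtain ⟨hs₀, hs₁⟩ := hs
  have hs₁' := sub_nonneg.2 hs₁
  have hweight : (1 - s) ^ 2 ≤ 1 - s := by nlinarith
  calc ((1 - s) * A 0 1) ^ 2
      ≤ (1 - s) * A 0 1 ^ 2 := by
        rw [mul_pow]; exact mul_le_mul_of_nonneg_right hweight (sq_nonneg _)
    _ ≤ (1 - s) * ((A 0 1 - A 1 0) ^ 2 + (A 0 1 + A 1 0) ^ 2) :=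
      mul_le_mul_of_nonneg_left (by nlinarith [sq_nonneg (A 0 1), sq_nonneg (A 1 0)]) hs₁'
    _ ≤ phaseDefect s A := by
      unfold phaseDefect
      linarith [mul_nonneg hs₀ (sq_nonneg (A 0 1 - A 1 0)),
        mul_nonneg hs₀ (sq_nonneg (A 0 0 + A 1 1)), mul_nonneg hs₁' (sq_nonneg (A 0 0 - A 1 1))]

end Energy

section Laminate

variable {χ : ℝ → ℝ} {v : (Fin 2 → ℝ) → (Fin 2 → ℝ)} {K : NNReal}

lemma mul_setIntegral_phaseDefect_le {lam1 mu1 lam2 mu2 c : ℝ} (hmu : mu1 = -(lam2 + mu2))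
    (hc₀ : c ≤ mu1) (hc₁ : c ≤ lam1 + 2 * mu1) (hc₂ : c ≤ mu2 - mu1) (hχ : Measurable χ)
    (hχI : ∀ t, χ t ∈ Set.Icc 0 1) (hv : LipschitzWith K v) (hper : ZsqPeriodic v)
    (M : Matrix (Fin 2) (Fin 2) ℝ) :
    c * ∫ x in unitCell, phaseDefect (χ (x 0)) (M + jac v x)
      ≤ (∫ x in unitCell, (χ (x 0) * isoQ lam1 mu1 (M + jac v x)
          + (1 - χ (x 0)) * isoQ lam2 mu2 (M + jac v x))) + 4 * mu1 * M.det := by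
  have hint {G : ℝ × Matrix (Fin 2) (Fin 2) ℝ → ℝ} (hG : Continuous G) :
      IntegrableOn (fun x => G (χ (x 0), jac v x)) unitCell :=
    integrableOn_comp_phase_jac hv hχ hχI hG
  have henergy : IntegrableOn (fun x => χ (x 0) * isoQ lam1 mu1 (M + jac v x)
      + (1 - χ (x 0)) * isoQ lam2 mu2 (M + jac v x)) unitCell :=
    hint (G := fun p => p.1 * isoQ lam1 mu1 (M + p.2) + (1 - p.1) * isoQ lam2 mu2 (M + p.2))
      (by unfold isoQ; fun_prop)
  have hdet : IntegrableOn (fun x => 4 * mu1 * (M + jac v x).det) unitCell :=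
    hint (G := fun p => 4 * mu1 * (M + p.2).det) (by fun_prop)
  have hdefect : IntegrableOn (fun x => c * phaseDefect (χ (x 0)) (M + jac v x)) unitCell :=
    hint (G := fun p => c * phaseDefect p.1 (M + p.2)) (by unfold phaseDefect; fun_prop)
  rw [← setIntegral_det_add_jac hv hper M, ← integral_const_mul, ← integral_const_mul,
    ← integral_add henergy hdet]
  exact integral_mono hdefect (henergy.add hdet) fun x =>
    mul_phaseDefect_le hmu hc₀ hc₁ hc₂ (hχI _) _

lemma setIntegral_affine_jac_eq (hχ : Measurable χ) (hχI : ∀ t, χ t ∈ Set.Icc 0 1)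
    (hχper : χ.Periodic 1) (hv : LipschitzWith K v) (hper : ZsqPeriodic v)
    (M : Matrix (Fin 2) (Fin 2) ℝ) (α p q : ℝ) (i k : Fin 2) :
    ∫ x in unitCell, (α * (M + jac v x) k 0 + (p + q * χ (x 0)) * (M + jac v x) i 1)
      = α * M k 0 + (p + q * ∫ t in (0 : ℝ)..1, χ t) * M i 1 := by
  have hint {G : ℝ × Matrix (Fin 2) (Fin 2) ℝ → ℝ} (hG : Continuous G) :
      IntegrableOn (fun x => G (χ (x 0), jac v x)) unitCell :=
    integrableOn_comp_phase_jac hv hχ hχI hG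
  have hqχ : IntegrableOn (fun x => q * χ (x 0)) unitCell :=
    hint (G := fun r => q * r.1) (by fun_prop)
  have hconst : ∫ x in unitCell, α * (M + jac v x) k 0 = α * M k 0 := by
    simpa [mul_comm] using setIntegral_add_jac_mul hv hper M k 0 (w := fun _ => α)
      (integrable_const α) (fun _ _ _ => rfl) fun _ _ => rfl
  have hweight : ∫ x in unitCell, (p + q * χ (x 0)) * (M + jac v x) i 1
      = (p + q * ∫ t in (0 : ℝ)..1, χ t) * M i 1 := by
    simp only [mul_comm _ ((M + jac v _) i 1)]
    rw [setIntegral_add_jac_mul hv hper M i 1 (w := fun x => p + q * χ (x 0))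
      ((integrable_const p).add hqχ), integral_add (integrable_const p) hqχ, integral_const_mul,
      setIntegral_unitCell_comp_eval hχ]
    · simp [mul_comm]
    · exact fun g hg x => congrArg (p + q * ·)
        (periodic_comp_eval_of_mem_intLattice hχper 0 g hg x)
    · exact fun t x => by simp
  rw [integral_add (hint (G := fun r => α * (M + r.2) k 0) (by fun_prop))
    (hint (G := fun r => (p + q * r.1) * (M + r.2) i 1) (by fun_prop)), hconst, hweight]

lemma sq_affine_le_setIntegral_phaseDefect (hχ : Measurable χ) (hχI : ∀ t, χ t ∈ Set.Icc 0 1)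
    (hχper : χ.Periodic 1) (hv : LipschitzWith K v) (hper : ZsqPeriodic v)
    (M : Matrix (Fin 2) (Fin 2) ℝ) {α p q : ℝ} {i k : Fin 2}
    (hle : ∀ s ∈ Set.Icc (0 : ℝ) 1, ∀ A : Matrix (Fin 2) (Fin 2) ℝ,
      (α * A k 0 + (p + q * s) * A i 1) ^ 2 ≤ phaseDefect s A) :
    (α * M k 0 + (p + q * ∫ t in (0 : ℝ)..1, χ t) * M i 1) ^ 2
      ≤ ∫ x in unitCell, phaseDefect (χ (x 0)) (M + jac v x) := by
  have hint {G : ℝ × Matrix (Fin 2) (Fin 2) ℝ → ℝ} (hG : Continuous G) :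
      IntegrableOn (fun x => G (χ (x 0), jac v x)) unitCell :=
    integrableOn_comp_phase_jac hv hχ hχI hG
  have hsq := hint (G := fun r =>
    (α * (M + r.2) k 0 + (p + q * r.1) * (M + r.2) i 1) ^ 2) (by fun_prop)
  rw [← setIntegral_affine_jac_eq hχ hχI hχper hv hper]
  refine (sq_integral_le_integral_sq (hint (G := fun r =>
    α * (M + r.2) k 0 + (p + q * r.1) * (M + r.2) i 1) (by fun_prop)) hsq).trans ?_
  exact integral_mono hsq (hint (G := fun r => phaseDefect r.1 (M + r.2))
    (by unfold phaseDefect; fun_prop)) fun x => hle _ (hχI _) _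

end Laminate

lemma eq_zero_and_tendsto_zero_of_mul_le_add {ι : Type*} {F : Filter ι} [F.NeBot] {D E : ι → ℝ}
    {c d : ℝ} (hc : 0 < c) (hd : d ≤ 0) (hD : ∀ n, 0 ≤ D n) (hle : ∀ n, c * D n ≤ E n + d)
    (hE : Tendsto E F (𝓝 0)) : d = 0 ∧ Tendsto D F (𝓝 0) := by
  have hd₀ : -d ≤ 0 := ge_of_tendsto' hE fun n => by linarith [hle n, mul_nonneg hc.le (hD n)]
  refine ⟨by linarith, squeeze_zero hD (fun n => ?_) (by simpa using hE.const_mul c⁻¹)⟩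
  exact (le_inv_mul_iff₀ hc).2 (by linarith [hle n])

lemma eq_smul_e2e2_of_mean_relations {θ : ℝ} {M : Matrix (Fin 2) (Fin 2) ℝ} (hdet : M.det = 0)
    (hrot : M 0 1 = M 1 0) (hdiag : M 0 0 + (2 * θ - 1) * M 1 1 = 0)
    (hshear : (1 - θ) * M 0 1 = 0) : M = M 1 1 • e2e2 ∧ (θ ≠ 1 / 2 → M = 0) := by
  rw [Matrix.det_fin_two, ← hrot] at hdet
  have h01 : M 0 1 = 0 := by
    by_contra h
    obtain rfl : θ = 1 := by linarith [(mul_eq_zero.1 hshear).resolve_right h]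
    have h00 : M 0 0 = -M 1 1 := by linarith
    rw [h00] at hdet
    nlinarith [sq_nonneg (M 1 1), pow_pos (abs_pos.2 h) 2, sq_abs (M 0 1)]
  have h00 : M 0 0 = 0 := by
    rw [h01, zero_mul, sub_zero] at hdet
    have hsq : M 0 0 ^ 2 = 0 := by linear_combination M 0 0 * hdiag - (2 * θ - 1) * hdet
    exact (pow_eq_zero_iff two_ne_zero).1 hsq
  have hM : M = M 1 1 • e2e2 := by
    ext i j
    fin_cases i <;> fin_cases j <;> simp [e2e2, h00, h01, ← hrot]
  refine ⟨hM, fun hθ => ?_⟩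
  have h11 : M 1 1 = 0 := by
    rw [h00, zero_add] at hdiag
    exact (mul_eq_zero.1 hdiag).resolve_left fun h => hθ (by linarith)
  rw [hM, h11, zero_smul]

theorem stmt_12_general (lam1 mu1 lam2 mu2 : ℝ)
    (h1 : 0 < mu1) (h2 : mu1 = -(lam2 + mu2)) (h3 : mu1 < mu2)
    (h4 : 0 < lam1 + 2 * mu1)
    (χ : ℝ → ℝ) (hχmeas : Measurable χ) (hχI : ∀ t, χ t ∈ Set.Icc 0 1)
    (hχper : χ.Periodic 1)
    (θ₁ : ℝ) (hθ : θ₁ = ∫ t in (0 : ℝ)..1, χ t)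
    (M : Matrix (Fin 2) (Fin 2) ℝ) (hM : M.det ≤ 0)
    (v : ℕ → (Fin 2 → ℝ) → (Fin 2 → ℝ)) (K : ℕ → NNReal)
    (hlip : ∀ n, LipschitzWith (K n) (v n)) (hper : ∀ n, ZsqPeriodic (v n))
    (henergy : Tendsto
      (fun n => ∫ x in unitCell,
        (χ (x 0) * isoQ lam1 mu1 (M + jac (v n) x)
          + (1 - χ (x 0)) * isoQ lam2 mu2 (M + jac (v n) x)))
      atTop (𝓝 0)) :
    M 0 0 = 0 ∧ M 0 1 = 0 ∧ M 1 0 = 0 ∧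
    (∃ κ : ℝ, M = κ • e2e2) ∧
    (θ₁ ≠ 1 / 2 → M = 0) := by
  obtain ⟨c, hc, hc₀, hc₁, hc₂⟩ : ∃ c, 0 < c ∧ c ≤ mu1 ∧ c ≤ lam1 + 2 * mu1 ∧ c ≤ mu2 - mu1 :=
    ⟨min mu1 (min (lam1 + 2 * mu1) (mu2 - mu1)), by simp [h1, h3, h4], by simp, by simp, by simp⟩
  obtain ⟨hdet, hdefect⟩ := eq_zero_and_tendsto_zero_of_mul_le_add hc
    (mul_nonpos_of_nonneg_of_nonpos (by positivity) hM)
    (fun n => integral_nonneg fun x => phaseDefect_nonneg (hχI (x 0)) (M + jac (v n) x))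
    (fun n => mul_setIntegral_phaseDefect_le h2 hc₀ hc₁ hc₂ hχmeas hχI (hlip n) (hper n) M) henergy
  have mean_eq_zero {α p q : ℝ} {i k : Fin 2} (hle : ∀ s ∈ Set.Icc (0 : ℝ) 1,
      ∀ A : Matrix (Fin 2) (Fin 2) ℝ, (α * A k 0 + (p + q * s) * A i 1) ^ 2 ≤ phaseDefect s A) :
      α * M k 0 + (p + q * θ₁) * M i 1 = 0 := by
    have hsq := ge_of_tendsto' hdefect fun n =>
      sq_affine_le_setIntegral_phaseDefect hχmeas hχI hχper (hlip n) (hper n) M hle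
    rw [hθ]
    exact (pow_eq_zero_iff two_ne_zero).1 (hsq.antisymm (sq_nonneg _))
  have hrot : -1 * M 1 0 + (1 + 0 * θ₁) * M 0 1 = 0 := mean_eq_zero fun s hs A =>
    (sq_rot_le_phaseDefect hs A).trans_eq' (by ring)
  have hdiag : 1 * M 0 0 + (-1 + 2 * θ₁) * M 1 1 = 0 := mean_eq_zero fun s hs A =>
    (sq_diag_le_phaseDefect hs A).trans_eq' (by ring)
  have hshear : 0 * M 0 0 + (1 + -1 * θ₁) * M 0 1 = 0 := mean_eq_zero fun s hs A =>
    (sq_shear_le_phaseDefect hs A).trans_eq' (by ring)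
  obtain ⟨hMe, hM₀⟩ := eq_smul_e2e2_of_mean_relations (θ := θ₁)
    ((mul_eq_zero.1 hdet).resolve_left (by positivity)) (by linarith) (by linarith) (by linarith)
  refine ⟨?_, ?_, ?_, ⟨_, hMe⟩, hM₀⟩ <;> rw [hMe] <;> simp [e2e2]

theorem stmt_12 (lam1 mu1 lam2 mu2 : ℝ)
    (h1 : 0 < mu1) (h2 : mu1 = -(lam2 + mu2)) (h3 : mu1 < mu2)
    (h4 : 0 < lam1 + mu1)
    (χ : ℝ → ℝ) (hχmeas : Measurable χ) (hχ01 : ∀ t, χ t = 0 ∨ χ t = 1)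
    (hχper : ∀ t, χ (t + 1) = χ t)
    (θ₁ : ℝ) (hθ : θ₁ = ∫ t in (0 : ℝ)..1, χ t)
    (a b : Fin 2 → ℝ) (M : Matrix (Fin 2) (Fin 2) ℝ)
    (hM : M = Matrix.vecMulVec a b)
    (v : ℕ → (Fin 2 → ℝ) → (Fin 2 → ℝ)) (K : ℕ → NNReal)
    (hlip : ∀ n, LipschitzWith (K n) (v n)) (hper : ∀ n, ZsqPeriodic (v n))
    (hbd : ∃ C : ℝ, ∀ n,
      (∫ x in unitCell, ∑ i : Fin 2, ∑ j : Fin 2, (jac (v n) x i j) ^ 2) ≤ C)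
    (henergy : Filter.Tendsto
      (fun n => ∫ x in unitCell,
        (χ (x 0) * isoQ lam1 mu1 (M + jac (v n) x)
          + (1 - χ (x 0)) * isoQ lam2 mu2 (M + jac (v n) x)))
      Filter.atTop (nhds 0)) :
    M 0 0 = 0 ∧ M 0 1 = 0 ∧ M 1 0 = 0 ∧
    (∃ κ : ℝ, M = κ • e2e2) ∧
    (θ₁ ≠ 1 / 2 → M = 0) := by
  exact stmt_12_general lam1 mu1 lam2 mu2 h1 h2 h3 (by linarith) χ hχmeas
    (fun t => by rcases hχ01 t with h | h <;> simp [h]) hχper θ₁ hθ M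
    (by rw [hM, Matrix.det_vecMulVec]) v K hlip hper henergy
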